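/- Let D be a simple object of the category of ťtale ŌÜ-modules over K = k((u)) (k = ő≤F_p). Then there exist integers őī > 0, n ‚Č• 0 and a nonzero z ‚ąą D with ŌÜ^őī(z) = u^n z. -/

import Mathlib

/-!
Write `Φ` for the `φ`-semilinear map of the étale module `V`. After rescaling a basis by a power of
`u`, the `k⟦u⟧`-lattice `M` it spans is stable under `Φ`, and since `V` is étale there is `h` such
that no vector of `M \ u M` is sent into `u ^ (h + 1) M`. Hence each `x₀ ∈ M \ u M` starts an orbit
`Φ (xᵢ) = u ^ vᵢ • xᵢ₊₁` with `vᵢ ≤ h` and `xᵢ ∈ M \ u M`, and `Φ ^ δ (xᵢ) = u ^ n • xᵢ₊δ` with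
`n ≤ h * (b ^ δ - 1)`.

Modulo `u ^ (h + 1)` the step `xᵢ ↦ xᵢ₊₁` only involves the finitely many coefficients of the matrix
of `Φ` below `u ^ (2 * h + 1)`. As `k` is algebraic over `𝔽_p`, these lie in a finite subring stable
under `σ`, so the orbit of a basis vector has a repetition `xᵢ₊δ ≡ xᵢ` modulo `u ^ (h + 1)`. By the
bound on `n`, the operator `T = u ^ (-n) Φ ^ δ` maps `u ^ m M` into `u ^ (m + 1) M` for all `m > h`,
so the approximate fixed point `xᵢ` of `T` lifts to an exact one, which is nonzero because
`xᵢ ∉ u M`.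
-/

namespace PhiModule

open HahnSeries LaurentSeries Module

section LaurentSeries

variable {k : Type*} [CommRing k]

theorem coe_le_orderTop_iff {m : ℤ} {f : k⸨X⸩} :
    (m : WithTop ℤ) ≤ f.orderTop ↔ ∀ j < m, f.coeff j = 0 := by
  simp only [le_orderTop_iff_forall, WithTop.coe_lt_coe]

theorem exists_coe_le_orderTop (f : k⸨X⸩) : ∃ m : ℤ, (m : WithTop ℤ) ≤ f.orderTop :=
  ⟨f.order, coe_le_orderTop_iff.2 fun _ ↦ coeff_eq_zero_of_lt_order⟩

theorem coe_le_orderTop_single_mul_iff {m n : ℤ} {f : k⸨X⸩} :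
    (m : WithTop ℤ) ≤ (single n 1 * f).orderTop ↔ ((m - n : ℤ) : WithTop ℤ) ≤ f.orderTop := by
  simp only [coe_le_orderTop_iff, coeff_single_mul, one_mul]
  exact ⟨fun h j hj ↦ by simpa using h (j + n) (by lia), fun h j hj ↦ h _ (by lia)⟩

theorem coe_add_le_orderTop_mul {m n : ℤ} {f g : k⸨X⸩} (hf : (m : WithTop ℤ) ≤ f.orderTop)
    (hg : (n : WithTop ℤ) ≤ g.orderTop) : ((m + n : ℤ) : WithTop ℤ) ≤ (f * g).orderTop :=
  (WithTop.coe_add m n ▸ add_le_add hf hg).trans orderTop_add_le_mul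

theorem coeff_eq_of_le_orderTop_sub {y : ℕ → k⸨X⸩} {c : ℤ}
    (hy : ∀ j : ℕ, ((c + j : ℤ) : WithTop ℤ) ≤ (y (j + 1) - y j).orderTop) {i j : ℕ} (hij : i ≤ j)
    {l : ℤ} (hl : l < c + i) : (y j).coeff l = (y i).coeff l := by
  induction j, hij using Nat.le_induction with
  | base => rfl
  | succ j hij ih =>
    have hstep := coe_le_orderTop_iff.1 (hy j) l (by lia)
    rwa [coeff_sub, sub_eq_zero, ih] at hstep

theorem exists_limit {y : ℕ → k⸨X⸩} {c : ℤ}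
    (hy : ∀ j : ℕ, ((c + j : ℤ) : WithTop ℤ) ≤ (y (j + 1) - y j).orderTop) :
    ∃ z : k⸨X⸩, ∀ j : ℕ, ((c + j : ℤ) : WithTop ℤ) ≤ (z - y j).orderTop := by
  obtain ⟨m, hm⟩ := exists_coe_le_orderTop (y 0)
  -- The coefficient of `u ^ l` no longer changes from the index `l - c + 1` on.
  let a : ℤ → k := fun l ↦ (y (l - c + 1).toNat).coeff l
  have ha : ∀ l < min m c, a l = 0 := fun l hl ↦ by
    have h0 : (l - c + 1).toNat = 0 := by lia
    simpa only [a, h0] using coe_le_orderTop_iff.1 hm l (by lia)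
  have hbdd : BddBelow (Function.support a) :=
    ⟨min m c, fun l hl ↦ not_lt.1 fun hlt ↦ Function.mem_support.1 hl (ha l hlt)⟩
  refine ⟨ofSuppBddBelow a hbdd, fun j ↦ ?_⟩
  refine coe_le_orderTop_iff.2 fun l hl ↦ ?_
  rw [coeff_sub, coeff_ofSuppBddBelow, sub_eq_zero]
  exact (coeff_eq_of_le_orderTop_sub hy (by lia) (by lia)).symm

/-- The subring of `k⟦u⟧ ⊆ k((u))` of the series whose coefficients below `u ^ N` lie in `S`, that
is, the preimage of `S[u] / u ^ N`. It is used for finite `S`, which cannot in general contain all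
the coefficients of a series. -/
def truncIntegral (S : Subring k) (N : ℤ) : Subring k⸨X⸩ where
  carrier := {f | 0 ≤ f.orderTop ∧ ∀ j < N, f.coeff j ∈ S}
  zero_mem' := ⟨by simp, fun j _ ↦ by simp⟩
  one_mem' := ⟨orderTop_single_le, fun j _ ↦ by
    rw [coeff_one]
    split_ifs
    exacts [S.one_mem, S.zero_mem]⟩
  add_mem' hf hg := ⟨(le_min hf.1 hg.1).trans min_orderTop_le_orderTop_add,
    fun j hj ↦ S.add_mem (hf.2 j hj) (hg.2 j hj)⟩
  neg_mem' hf := ⟨hf.1.trans_eq orderTop_neg.symm, fun j hj ↦ S.neg_mem (hf.2 j hj)⟩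
  mul_mem' {f g} hf hg := by
    refine ⟨(add_nonneg hf.1 hg.1).trans orderTop_add_le_mul, fun j hj ↦ ?_⟩
    rw [coeff_mul]
    refine S.sum_mem fun x hx ↦ ?_
    obtain ⟨hxf, hxg, hadd⟩ := Finset.mem_antidiagonal.1 hx
    have h1 : 0 ≤ x.1 := WithTop.coe_le_coe.1 (hf.1.trans (orderTop_le_of_coeff_ne_zero hxf))
    have h2 : 0 ≤ x.2 := WithTop.coe_le_coe.1 (hg.1.trans (orderTop_le_of_coeff_ne_zero hxg))
    exact S.mul_mem (hf.2 _ (by lia)) (hg.2 _ (by lia))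

theorem truncIntegral_antitone (S : Subring k) : Antitone (truncIntegral S) :=
  fun _ _ h _ hf ↦ ⟨hf.1, fun j hj ↦ hf.2 j (hj.trans_le h)⟩

theorem single_neg_mul_mem_truncIntegral {S : Subring k} {N v : ℤ} {f : k⸨X⸩}
    (hf : f ∈ truncIntegral S N) (hv : (v : WithTop ℤ) ≤ f.orderTop) :
    single (-v) 1 * f ∈ truncIntegral S (N - v) := by
  refine ⟨coe_le_orderTop_single_mul_iff.2 (by simpa using hv), fun j hj ↦ ?_⟩
  rw [coeff_single_mul, one_mul]
  exact hf.2 _ (by lia)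

end LaurentSeries

/-- `φ (∑ aₘ uᵐ) = ∑ σ(aₘ) u ^ (b * m)`: the endomorphism of `k((u))` acting by `σ` on `k` and
sending `u` to `u ^ b`. -/
structure IsTwistedSubstitution {k : Type*} [CommRing k] (b : ℕ) (σ : k →+* k)
    (φ : k⸨X⸩ →+* k⸨X⸩) : Prop where
  coeff_mul : ∀ (f : k⸨X⸩) (m : ℤ), (φ f).coeff (b * m) = σ (f.coeff m)
  coeff_of_not_dvd : ∀ (f : k⸨X⸩) (m : ℤ), ¬ (b : ℤ) ∣ m → (φ f).coeff m = 0

namespace IsTwistedSubstitution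

variable {k : Type*} [CommRing k] {b : ℕ} {σ : k →+* k} {φ : k⸨X⸩ →+* k⸨X⸩}
  (hφ : IsTwistedSubstitution b σ φ)
include hφ

theorem le_orderTop_map {m : ℤ} {f : k⸨X⸩} (hf : (m : WithTop ℤ) ≤ f.orderTop) :
    ((b * m : ℤ) : WithTop ℤ) ≤ (φ f).orderTop := by
  refine coe_le_orderTop_iff.2 fun j hj ↦ ?_
  by_cases hdvd : (b : ℤ) ∣ j
  · obtain ⟨i, rfl⟩ := hdvd
    have hi : i < m := lt_of_mul_lt_mul_left hj (by lia)
    rw [hφ.coeff_mul, coe_le_orderTop_iff.1 hf i hi, map_zero]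
  · exact hφ.coeff_of_not_dvd f j hdvd

theorem le_orderTop_of_map (hσ : Function.Injective σ) {m : ℤ} {f : k⸨X⸩}
    (hf : ((b * m + 1 : ℤ) : WithTop ℤ) ≤ (φ f).orderTop) :
    ((m + 1 : ℤ) : WithTop ℤ) ≤ f.orderTop := by
  refine coe_le_orderTop_iff.2 fun j hj ↦ ?_
  have hcoeff : (φ f).coeff (b * j) = 0 := coe_le_orderTop_iff.1 hf _ (by nlinarith)
  rwa [hφ.coeff_mul, map_eq_zero_iff σ hσ] at hcoeff

theorem map_mem_truncIntegral {S : Subring k} (hS : S ≤ S.comap σ) {N : ℤ} {f : k⸨X⸩}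
    (hf : f ∈ truncIntegral S N) : φ f ∈ truncIntegral S (b * N) := by
  refine ⟨by simpa using hφ.le_orderTop_map (m := 0) hf.1, fun j hj ↦ ?_⟩
  by_cases hdvd : (b : ℤ) ∣ j
  · obtain ⟨i, rfl⟩ := hdvd
    rw [hφ.coeff_mul]
    exact hS (hf.2 i (lt_of_mul_lt_mul_left hj (by lia)))
  · rw [hφ.coeff_of_not_dvd f j hdvd]
    exact S.zero_mem

theorem map_single (hb : 0 < b) (n : ℤ) : φ (single n 1) = single (b * n) 1 := by
  ext j
  by_cases hdvd : (b : ℤ) ∣ j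
  · obtain ⟨i, rfl⟩ := hdvd
    rw [hφ.coeff_mul, coeff_single, coeff_single]
    have : (b * i : ℤ) = b * n ↔ i = n := by simp [hb.ne']
    split_ifs <;> simp_all
  · rw [hφ.coeff_of_not_dvd _ _ hdvd, coeff_single_of_ne]
    rintro rfl
    exact hdvd (dvd_mul_right _ _)

end IsTwistedSubstitution

section Lattice

variable {k V ι : Type*} [CommRing k] [AddCommGroup V] [Module k⸨X⸩ V]
  {e : Basis ι k⸨X⸩ V} {x : V} {m n : ℤ}

/-- The `k⟦u⟧`-lattice `u ^ m M ⊆ V`, where `M` is the `k⟦u⟧`-span of the basis `e`. Only its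
additive structure is recorded. -/
def lattice (e : Basis ι k⸨X⸩ V) (m : ℤ) : AddSubgroup V where
  carrier := {x | ∀ i, (m : WithTop ℤ) ≤ (e.repr x i).orderTop}
  zero_mem' i := by simp
  add_mem' hx hy i := by
    rw [map_add, Finsupp.add_apply]
    exact (le_min (hx i) (hy i)).trans min_orderTop_le_orderTop_add
  neg_mem' hx i := by
    rw [map_neg, Finsupp.neg_apply, orderTop_neg]
    exact hx i

theorem mem_lattice_iff : x ∈ lattice e m ↔ ∀ i, (m : WithTop ℤ) ≤ (e.repr x i).orderTop :=
  Iff.rfl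

theorem lattice_antitone (e : Basis ι k⸨X⸩ V) : Antitone (lattice e) :=
  fun _ _ hmn _ hx i ↦ (WithTop.coe_le_coe.2 hmn).trans (hx i)

theorem smul_mem_lattice {f : k⸨X⸩} (hf : (m : WithTop ℤ) ≤ f.orderTop) (hx : x ∈ lattice e n) :
    f • x ∈ lattice e (m + n) := fun i ↦ by
  rw [map_smul, Finsupp.smul_apply, smul_eq_mul]
  exact coe_add_le_orderTop_mul hf (hx i)

theorem single_smul_mem_lattice_iff :
    (single n 1 : k⸨X⸩) • x ∈ lattice e m ↔ x ∈ lattice e (m - n) :=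
  forall_congr' fun i ↦ by
    rw [map_smul, Finsupp.smul_apply, smul_eq_mul, coe_le_orderTop_single_mul_iff]

theorem eq_zero_of_forall_mem_lattice (hx : ∀ m : ℕ, x ∈ lattice e m) : x = 0 := by
  refine e.ext_elem fun i ↦ HahnSeries.ext <| funext fun j ↦ ?_
  have hj : (e.repr x i).coeff j = 0 := coe_le_orderTop_iff.1 (hx (j.toNat + 1) i) j (by lia)
  simpa using hj

theorem exists_forall_mem_lattice [Finite ι] {κ : Type*} [Finite κ] (e : Basis ι k⸨X⸩ V)
    (w : κ → V) : ∃ m : ℤ, ∀ j, w j ∈ lattice e m := by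
  choose f hf using fun a : κ × ι ↦ exists_coe_le_orderTop (e.repr (w a.1) a.2)
  obtain ⟨m, hm⟩ := Finite.exists_ge f
  exact ⟨m, fun j i ↦ (WithTop.coe_le_coe.2 (hm (j, i))).trans (hf (j, i))⟩

theorem mem_lattice_of_basis_mem_lattice [Finite ι] {ι' : Type*} {e' : Basis ι' k⸨X⸩ V}
    (he : ∀ i, e i ∈ lattice e' n) (hx : x ∈ lattice e m) : x ∈ lattice e' (m + n) := by
  have := Fintype.ofFinite ι
  rw [← e.sum_repr x]
  exact sum_mem fun i _ ↦ smul_mem_lattice (hx i) (he i)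

theorem exists_mem_lattice_notMem_lattice_add_one {h : ℕ} (hx : x ∈ lattice e 0)
    (hxh : x ∉ lattice e (h + 1)) :
    ∃ v : ℕ, v ≤ h ∧ x ∈ lattice e v ∧ x ∉ lattice e (v + 1) := by
  induction h with
  | zero => exact ⟨0, le_rfl, by simpa using hx, hxh⟩
  | succ h ih =>
    by_cases hmem : x ∈ lattice e (h + 1)
    · exact ⟨h + 1, le_rfl, mod_cast hmem, hxh⟩
    · obtain ⟨v, hvh, hv⟩ := ih hmem
      exact ⟨v, hvh.trans h.le_succ, hv⟩

theorem exists_lattice_limit [Finite ι] {c : ℤ} {y : ℕ → V}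
    (hy : ∀ j : ℕ, y (j + 1) - y j ∈ lattice e (c + j)) :
    ∃ z : V, ∀ j : ℕ, z - y j ∈ lattice e (c + j) := by
  simp only [mem_lattice_iff, map_sub, Finsupp.sub_apply] at hy
  choose z hz using fun i ↦ exists_limit (y := fun j ↦ e.repr (y j) i) fun j ↦ hy j i
  refine ⟨e.equivFun.symm z, fun j i ↦ ?_⟩
  rw [map_sub, Finsupp.sub_apply, ← e.equivFun_apply, LinearEquiv.apply_symm_apply]
  exact hz i j

theorem exists_fixedPoint_of_contracting [Finite ι] {c : ℕ} {T : V →+ V} {y : V}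
    (hT : ∀ (m : ℕ) (x : V), c ≤ m → x ∈ lattice e m → T x ∈ lattice e (m + 1))
    (hy : T y - y ∈ lattice e c) : ∃ z : V, T z = z ∧ z - y ∈ lattice e c := by
  have hstep (j : ℕ) : T^[j + 1] y - T^[j] y ∈ lattice e (c + j) := by
    induction j with
    | zero => simpa using hy
    | succ j ih =>
      have hmap := hT (c + j) _ (by lia) (mod_cast ih)
      rw [map_sub, ← Function.iterate_succ_apply' T, ← Function.iterate_succ_apply' T] at hmap
      exact mod_cast hmap
  obtain ⟨z, hz⟩ := exists_lattice_limit (y := fun j ↦ T^[j] y) hstep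
  refine ⟨z, sub_eq_zero.1 (eq_zero_of_forall_mem_lattice (e := e) fun m ↦ ?_), by simpa using hz 0⟩
  have hTz : T (z - T^[m] y) ∈ lattice e m :=
    lattice_antitone e (by lia) (hT (c + m) _ (by lia) (mod_cast hz m))
  have hz' : z - T^[m + 1] y ∈ lattice e m := lattice_antitone e (by lia) (hz (m + 1))
  rw [map_sub, ← Function.iterate_succ_apply' T] at hTz
  simpa using sub_mem hTz hz'

theorem exists_lt_sub_mem_lattice [Finite ι] {S : Subring k} [Finite S] {N : ℕ} {x : ℕ → V}
    (hx : ∀ n i, e.repr (x n) i ∈ truncIntegral S N) :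
    ∃ i j, i < j ∧ x j - x i ∈ lattice e N := by
  let residue (n : ℕ) (i : ι) (l : Fin N) : S :=
    ⟨(e.repr (x n) i).coeff l, (hx n i).2 l (mod_cast l.2)⟩
  obtain ⟨i, j, hij, hres⟩ := Finite.exists_ne_map_eq_of_infinite residue
  have hmem : x j - x i ∈ lattice e N := fun a ↦ by
    refine coe_le_orderTop_iff.2 fun l hl ↦ ?_
    rw [map_sub, Finsupp.sub_apply, coeff_sub, sub_eq_zero]
    obtain hneg | hpos := lt_or_ge l 0
    · have hzero (n : ℕ) := coe_le_orderTop_iff.1 (hx n a).1 l hneg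
      rw [hzero, hzero]
    · lift l to ℕ using hpos
      exact (congrArg Subtype.val (congrFun₂ hres a ⟨l, by lia⟩)).symm
  obtain hlt | hlt := hij.lt_or_gt
  · exact ⟨i, j, hlt, hmem⟩
  · exact ⟨j, i, hlt, by rw [← neg_sub]; exact neg_mem hmem⟩

end Lattice

section FiniteSubring

variable {k : Type*} [Field k]

theorem finite_eqLocus_iterateFrobenius (p : ℕ) [Fact p.Prime] [CharP k p] {n : ℕ} (hn : n ≠ 0) :
    Finite ((iterateFrobenius k p n).eqLocus (RingHom.id k)) := by
  have hne : (Polynomial.X ^ p ^ n - Polynomial.X : Polynomial k) ≠ 0 :=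
    FiniteField.X_pow_card_pow_sub_X_ne_zero k hn (Fact.out : p.Prime).one_lt
  refine (Polynomial.rootSet_finite
    (Polynomial.X ^ p ^ n - Polynomial.X : Polynomial k) k).subset fun x hx ↦ ?_
  have hx' : x ^ p ^ n = x := hx
  exact Polynomial.mem_rootSet.2 ⟨hne, by simp [hx']⟩

theorem exists_finite_subring (p : ℕ) [Fact p.Prime] [Algebra (ZMod p) k]
    [Algebra.IsAlgebraic (ZMod p) k] (σ : k →+* k) (s : Set k) [Finite s] :
    ∃ S : Subring k, Finite S ∧ S ≤ S.comap σ ∧ s ⊆ S := by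
  have : CharP k p := charP_of_injective_algebraMap (algebraMap (ZMod p) k).injective p
  let E := IntermediateField.adjoin (ZMod p) s
  have : FiniteDimensional (ZMod p) E :=
    IntermediateField.finiteDimensional_adjoin fun x _ ↦ Algebra.IsIntegral.isIntegral x
  have : Fintype E := @Fintype.ofFinite E (Module.finite_of_finite (ZMod p))
  let n := finrank (ZMod p) E
  refine ⟨(iterateFrobenius k p n).eqLocus (RingHom.id k),
    finite_eqLocus_iterateFrobenius p finrank_pos.ne', fun x (hx : x ^ p ^ n = x) ↦ ?_,
    fun x hx ↦ ?_⟩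
  · change σ x ^ p ^ n = σ x
    rw [← map_pow, hx]
  · have hcard : Fintype.card E = p ^ n := by
      rw [Module.card_eq_pow_finrank (K := ZMod p), ZMod.card]
    have hpow := FiniteField.pow_card (⟨x, IntermediateField.subset_adjoin _ _ hx⟩ : E)
    rw [hcard] at hpow
    exact congrArg Subtype.val hpow

theorem exists_finite_subring_truncIntegral (p : ℕ) [Fact p.Prime] [Algebra (ZMod p) k]
    [Algebra.IsAlgebraic (ZMod p) k] (σ : k →+* k) (N : ℕ) {κ : Type*} [Finite κ] {f : κ → k⸨X⸩}
    (hf : ∀ a, 0 ≤ (f a).orderTop) :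
    ∃ S : Subring k, Finite S ∧ S ≤ S.comap σ ∧ ∀ a, f a ∈ truncIntegral S N := by
  obtain ⟨S, hfin, hSσ, hS⟩ := exists_finite_subring p σ
    (Set.range fun a : κ × Fin N ↦ (f a.1).coeff (a.2 : ℕ))
  refine ⟨S, hfin, hSσ, fun a ↦ ⟨hf a, fun j hj ↦ ?_⟩⟩
  obtain hneg | hpos := lt_or_ge j 0
  · rw [coe_le_orderTop_iff.1 (hf a) j hneg]
    exact S.zero_mem
  · lift j to ℕ using hpos
    exact hS ⟨(a, ⟨j, by lia⟩), rfl⟩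

end FiniteSubring

section EtaleModule

variable {k V ι : Type*} [Field k] [AddCommGroup V] [Module k⸨X⸩ V]
  {e : Basis ι k⸨X⸩ V} {b : ℕ} {σ : k →+* k} {φ : k⸨X⸩ →+* k⸨X⸩} {Φ : V →ₛₗ[φ] V} {h : ℕ}

theorem map_eq_sum_repr [Fintype ι] (e : Basis ι k⸨X⸩ V) (Φ : V →ₛₗ[φ] V) (x : V) :
    Φ x = ∑ i, φ (e.repr x i) • Φ (e i) := by
  conv_lhs => rw [← e.sum_repr x]
  simp only [map_sum, LinearMap.map_smulₛₗ]

theorem map_mem_lattice [Finite ι] (hφ : IsTwistedSubstitution b σ φ) {m n : ℤ}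
    {e' : Basis ι k⸨X⸩ V} (hΦ : ∀ i, Φ (e i) ∈ lattice e' n) {x : V} (hx : x ∈ lattice e m) :
    Φ x ∈ lattice e' (b * m + n) := by
  have := Fintype.ofFinite ι
  rw [map_eq_sum_repr e Φ x]
  exact sum_mem fun i _ ↦ smul_mem_lattice (hφ.le_orderTop_map (hx i)) (hΦ i)

theorem iterate_map_mem_lattice [Finite ι] (hφ : IsTwistedSubstitution b σ φ)
    (hΦ : ∀ i, Φ (e i) ∈ lattice e 0) (δ : ℕ) {m : ℤ} {x : V} (hx : x ∈ lattice e m) :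
    Φ^[δ] x ∈ lattice e (b ^ δ * m) := by
  induction δ with
  | zero => simpa using hx
  | succ δ ih =>
    rw [Function.iterate_succ_apply', pow_succ', mul_assoc, ← add_zero (_ * _)]
    exact map_mem_lattice hφ hΦ ih

theorem exists_basis_map_mem_lattice [Finite ι] (hb : 1 < b) (hφ : IsTwistedSubstitution b σ φ)
    (e : Basis ι k⸨X⸩ V) (Φ : V →ₛₗ[φ] V) :
    ∃ e' : Basis ι k⸨X⸩ V, ∀ i, Φ (e' i) ∈ lattice e' 0 := by
  obtain ⟨m, hm⟩ := exists_forall_mem_lattice e (Φ ∘ e)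
  -- Scaling by `u ^ r` multiplies the matrix of `Φ` by `u ^ ((b - 1) * r)`.
  let r : ℤ := |m|
  let e' := e.isUnitSMul fun _ ↦ (single_ne_zero one_ne_zero : (single r 1 : k⸨X⸩) ≠ 0).isUnit
  have he' (i : ι) : e' i = (single r 1 : k⸨X⸩) • e i := e.isUnitSMul_apply _ i
  have hself (i : ι) : e' i ∈ lattice e' 0 := fun j ↦ by
    classical
    rw [e'.repr_self, Finsupp.single_apply]
    split_ifs <;> simp
  have he (i : ι) : e i ∈ lattice e' (-r) := by
    simpa [he', single_smul_mem_lattice_iff] using hself i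
  refine ⟨e', fun i ↦ ?_⟩
  rw [he', map_smulₛₗ, hφ.map_single (by lia), single_smul_mem_lattice_iff]
  refine lattice_antitone e' ?_ (mem_lattice_of_basis_mem_lattice he (hm i))
  have hr : -r ≤ m := neg_abs_le m
  have hr0 : 0 ≤ r := abs_nonneg m
  nlinarith

theorem exists_basis_eq_map [Finite ι] (e : Basis ι k⸨X⸩ V)
    (hΦ : Submodule.span k⸨X⸩ (Set.range Φ) = ⊤) :
    ∃ e' : Basis ι k⸨X⸩ V, ∀ i, e' i = Φ (e i) := by
  have := Fintype.ofFinite ι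
  have hspan : ⊤ ≤ Submodule.span k⸨X⸩ (Set.range (Φ ∘ e)) := by
    rw [← hΦ, Submodule.span_le]
    rintro _ ⟨x, rfl⟩
    rw [map_eq_sum_repr e Φ x]
    exact sum_mem fun i _ ↦ Submodule.smul_mem _ _ (Submodule.subset_span ⟨i, rfl⟩)
  exact ⟨basisOfTopLeSpanOfCardEqFinrank (Φ ∘ e) hspan (finrank_eq_card_basis e).symm,
    fun i ↦ congrFun (coe_basisOfTopLeSpanOfCardEqFinrank _ hspan _) i⟩

theorem exists_forall_mem_lattice_of_map [Finite ι] (hφ : IsTwistedSubstitution b σ φ)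
    (e : Basis ι k⸨X⸩ V) (hΦ : Submodule.span k⸨X⸩ (Set.range Φ) = ⊤) :
    ∃ h : ℕ, ∀ (m : ℤ) (x : V), Φ x ∈ lattice e (b * m + h + 1) → x ∈ lattice e (m + 1) := by
  have := Fintype.ofFinite ι
  obtain ⟨e', he'⟩ := exists_basis_eq_map e hΦ
  obtain ⟨r, hr⟩ := exists_forall_mem_lattice e' e
  refine ⟨r.natAbs, fun m x hx i ↦ hφ.le_orderTop_of_map σ.injective ?_⟩
  have hrepr : e'.repr (Φ x) i = φ (e.repr x i) := by
    rw [map_eq_sum_repr e Φ x]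
    simp only [← he', e'.repr_sum_self]
  rw [← hrepr]
  exact lattice_antitone e' (by lia) (mem_lattice_of_basis_mem_lattice hr hx) i

/-- The vectors of `M \ u M` that have coefficients in `S` modulo `u ^ N`, where `M` is the
`k⟦u⟧`-span of the basis `e`. -/
def primitiveVectors (e : Basis ι k⸨X⸩ V) (S : Subring k) (N : ℤ) : Set V :=
  {x | (∀ i, e.repr x i ∈ truncIntegral S N) ∧ x ∉ lattice e 1}

theorem basis_mem_primitiveVectors (e : Basis ι k⸨X⸩ V) (S : Subring k) (N : ℤ) (i : ι) :
    e i ∈ primitiveVectors e S N := by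
  classical
  refine ⟨fun j ↦ ?_, fun hi ↦ ?_⟩
  · rw [e.repr_self, Finsupp.single_apply]
    split_ifs
    exacts [one_mem _, zero_mem _]
  · have hle := hi i
    rw [e.repr_self, Finsupp.single_eq_same, orderTop_one] at hle
    exact absurd (WithTop.coe_le_coe.1 hle) (by simp)

variable {S : Subring k}

theorem repr_map_mem_truncIntegral [Finite ι] (hφ : IsTwistedSubstitution b σ φ)
    (hS : S ≤ S.comap σ) {N N' : ℤ} (hN : N' ≤ b * N)
    (hΦ : ∀ i j, e.repr (Φ (e j)) i ∈ truncIntegral S N') {x : V}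
    (hx : ∀ i, e.repr x i ∈ truncIntegral S N) (i : ι) :
    e.repr (Φ x) i ∈ truncIntegral S N' := by
  have := Fintype.ofFinite ι
  rw [map_eq_sum_repr e Φ x]
  simp only [map_sum, map_smul, Finsupp.finsetSum_apply, Finsupp.smul_apply, smul_eq_mul]
  exact sum_mem fun j _ ↦
    mul_mem (truncIntegral_antitone S hN (hφ.map_mem_truncIntegral hS (hx j))) (hΦ i j)

theorem exists_map_eq_single_smul [Finite ι] (hb : 1 < b) (hφ : IsTwistedSubstitution b σ φ)
    (hS : S ≤ S.comap σ) (hΦ : ∀ i j, e.repr (Φ (e j)) i ∈ truncIntegral S (2 * h + 1))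
    (hh : ∀ x, Φ x ∈ lattice e (h + 1) → x ∈ lattice e 1) {x : V}
    (hx : x ∈ primitiveVectors e S (h + 1)) :
    ∃ v ≤ h, ∃ y ∈ primitiveVectors e S (h + 1), Φ x = (single (v : ℤ) 1 : k⸨X⸩) • y := by
  have htrunc := repr_map_mem_truncIntegral hφ hS (by nlinarith) hΦ hx.1
  obtain ⟨v, hvh, hv, hv'⟩ :=
    exists_mem_lattice_notMem_lattice_add_one (fun i ↦ (htrunc i).1) fun hmem ↦ hx.2 (hh x hmem)
  refine ⟨v, hvh, (single (-v : ℤ) 1 : k⸨X⸩) • Φ x, ⟨fun i ↦ ?_, ?_⟩, by simp [smul_smul]⟩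
  · rw [map_smul, Finsupp.smul_apply, smul_eq_mul]
    exact truncIntegral_antitone S (by lia) (single_neg_mul_mem_truncIntegral (htrunc i) (hv i))
  · rw [single_smul_mem_lattice_iff, sub_neg_eq_add, add_comm]
    exact hv'

theorem exists_orbit [Finite ι] [Nonempty ι] (hb : 1 < b) (hφ : IsTwistedSubstitution b σ φ)
    (hS : S ≤ S.comap σ) (hΦ : ∀ i j, e.repr (Φ (e j)) i ∈ truncIntegral S (2 * h + 1))
    (hh : ∀ x, Φ x ∈ lattice e (h + 1) → x ∈ lattice e 1) :
    ∃ (x : ℕ → V) (v : ℕ → ℕ), (∀ n, x n ∈ primitiveVectors e S (h + 1)) ∧ (∀ n, v n ≤ h) ∧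
      ∀ n, Φ (x n) = (single (v n : ℤ) 1 : k⸨X⸩) • x (n + 1) := by
  choose v hv next hnext hmap using fun x : primitiveVectors e S (h + 1) ↦
    exists_map_eq_single_smul hb hφ hS hΦ hh x.2
  let x₀ : primitiveVectors e S (h + 1) :=
    ⟨_, basis_mem_primitiveVectors e S _ (Classical.arbitrary ι)⟩
  let x (n : ℕ) : primitiveVectors e S (h + 1) := (fun y ↦ ⟨next y, hnext y⟩)^[n] x₀
  refine ⟨fun n ↦ x n, fun n ↦ v (x n), fun n ↦ (x n).2, fun n ↦ hv (x n), fun n ↦ ?_⟩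
  simp only [x, Function.iterate_succ_apply', hmap]

-- The bound is `n ≤ h * (b ^ δ - 1)` without the truncated subtraction.
theorem exists_iterate_map_eq_single_smul (hb : 1 < b) (hφ : IsTwistedSubstitution b σ φ)
    {x : ℕ → V} {v : ℕ → ℕ} (hv : ∀ n, v n ≤ h)
    (hx : ∀ n, Φ (x n) = (single (v n : ℤ) 1 : k⸨X⸩) • x (n + 1)) (i δ : ℕ) :
    ∃ n : ℕ, n + h ≤ h * b ^ δ ∧ Φ^[δ] (x i) = (single (n : ℤ) 1 : k⸨X⸩) • x (i + δ) := by
  induction δ with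
  | zero => exact ⟨0, by simp, by simp⟩
  | succ δ ih =>
    obtain ⟨n, hn, hiter⟩ := ih
    refine ⟨b * n + v (i + δ), ?_, ?_⟩
    · have hvh := hv (i + δ)
      calc b * n + v (i + δ) + h ≤ b * (n + h) := by nlinarith
        _ ≤ b * (h * b ^ δ) := Nat.mul_le_mul_left b hn
        _ = h * b ^ (δ + 1) := by ring
    · rw [Function.iterate_succ_apply', hiter, map_smulₛₗ, hφ.map_single (by lia), hx, smul_smul,
        single_mul_single, one_mul, add_assoc]
      push_cast
      rfl

theorem exists_eigenvector_of_approx [Finite ι] (hb : 1 < b) (hφ : IsTwistedSubstitution b σ φ)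
    (hΦ : ∀ i, Φ (e i) ∈ lattice e 0) {δ n : ℕ} (hδ : 0 < δ) (hn : n + h ≤ h * b ^ δ) {x y : V}
    (hx : x ∉ lattice e 1) (hxy : Φ^[δ] x = (single (n : ℤ) 1 : k⸨X⸩) • y)
    (hyx : y - x ∈ lattice e (h + 1)) :
    ∃ z : V, z ≠ 0 ∧ Φ^[δ] z = (single (n : ℤ) 1 : k⸨X⸩) • z := by
  let T : V →+ V := AddMonoidHom.mk' (fun w ↦ (single (-n : ℤ) 1 : k⸨X⸩) • Φ^[δ] w) fun w w' ↦ by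
    rw [iterate_map_add, smul_add]
  have hT (w : V) : T w = (single (-n : ℤ) 1 : k⸨X⸩) • Φ^[δ] w := rfl
  have hcontract (m : ℕ) (w : V) (hm : h + 1 ≤ m) (hw : w ∈ lattice e m) :
      T w ∈ lattice e (m + 1) := by
    rw [hT, single_smul_mem_lattice_iff]
    refine lattice_antitone e ?_ (iterate_map_mem_lattice hφ hΦ δ hw)
    have hbδ : 1 < b ^ δ := Nat.one_lt_pow hδ.ne' hb
    have : m + 1 + n ≤ b ^ δ * m := by nlinarith
    push_cast [sub_neg_eq_add]
    exact_mod_cast this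
  have hTx : T x - x ∈ lattice e (h + 1 : ℕ) := by
    rw [hT, hxy, smul_smul, single_mul_single]
    simpa using hyx
  obtain ⟨z, hTz, hzx⟩ := exists_fixedPoint_of_contracting hcontract hTx
  refine ⟨z, ?_, ?_⟩
  · rintro rfl
    rw [zero_sub, neg_mem_iff] at hzx
    exact hx (lattice_antitone e (by lia) hzx)
  · conv_rhs => rw [← hTz, hT, smul_smul, single_mul_single]
    simp

end EtaleModule

end PhiModule

open PhiModule HahnSeries LaurentSeries Module in
theorem stmt14_general (p : ℕ) [Fact p.Prime] {k : Type*} [Field k] [Algebra (ZMod p) k]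
    [Algebra.IsAlgebraic (ZMod p) k] {b : ℕ} (hb : 1 < b) {σ : k →+* k} {φ : k⸨X⸩ →+* k⸨X⸩}
    (hφ : IsTwistedSubstitution b σ φ) {V : Type*} [AddCommGroup V] [Module k⸨X⸩ V]
    [FiniteDimensional k⸨X⸩ V] [Nontrivial V] (Φ : V →ₛₗ[φ] V)
    (hΦ : Submodule.span k⸨X⸩ (Set.range Φ) = ⊤) :
    ∃ δ n : ℕ, 0 < δ ∧ ∃ z : V, z ≠ 0 ∧ Φ^[δ] z = (single (n : ℤ) 1 : k⸨X⸩) • z := by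
  have : Nonempty (Fin (finrank k⸨X⸩ V)) := ⟨⟨0, finrank_pos⟩⟩
  obtain ⟨e, he⟩ := exists_basis_map_mem_lattice hb hφ (finBasis k⸨X⸩ V) Φ
  obtain ⟨h, hh⟩ := exists_forall_mem_lattice_of_map hφ e hΦ
  replace hh (x : V) (hx : Φ x ∈ lattice e (h + 1)) : x ∈ lattice e 1 := by
    simpa using hh 0 x (by simpa using hx)
  obtain ⟨S, hfin, hSσ, hS⟩ := exists_finite_subring_truncIntegral p σ (2 * h + 1)
    (f := fun a : Fin (finrank k⸨X⸩ V) × Fin (finrank k⸨X⸩ V) ↦ e.repr (Φ (e a.2)) a.1)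
    fun a ↦ he a.2 a.1
  obtain ⟨x, v, hx, hv, hstep⟩ := exists_orbit hb hφ hSσ (fun i j ↦ hS (i, j)) hh
  obtain ⟨i, j, hij, hclose⟩ := exists_lt_sub_mem_lattice (N := h + 1) fun n ↦ (hx n).1
  obtain ⟨δ, rfl⟩ := Nat.exists_eq_add_of_lt hij
  obtain ⟨n, hn, hiter⟩ := exists_iterate_map_eq_single_smul hb hφ hv hstep i (δ + 1)
  exact ⟨δ + 1, n, δ.succ_pos, exists_eigenvector_of_approx hb hφ he δ.succ_pos hn (hx i).2 hiter
    hclose⟩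

/-- Eigenvector theorem: every simple étale φ-module `D` over `K = k((u))`,
`k = F̄_p`, contains a nonzero `z` with `φ^δ(z) = uⁿ z` for some `δ > 0`, `n ≥ 0`. -/
theorem stmt14 (p : ℕ) [Fact p.Prime] (b : ℕ) (hb : 1 < b)
    (σ : AlgebraicClosure (ZMod p) ≃+* AlgebraicClosure (ZMod p))
    (φ : LaurentSeries (AlgebraicClosure (ZMod p)) →+*
      LaurentSeries (AlgebraicClosure (ZMod p)))
    (hφ1 : ∀ (f : LaurentSeries (AlgebraicClosure (ZMod p))) (m : ℤ),
      (φ f).coeff ((b : ℤ) * m) = σ (f.coeff m))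
    (hφ2 : ∀ (f : LaurentSeries (AlgebraicClosure (ZMod p))) (m : ℤ),
      ¬ ((b : ℤ) ∣ m) → (φ f).coeff m = 0)
    (V : Type*) [AddCommGroup V]
    [Module (LaurentSeries (AlgebraicClosure (ZMod p))) V]
    [FiniteDimensional (LaurentSeries (AlgebraicClosure (ZMod p))) V]
    [Nontrivial V]
    (φV : V → V)
    (hadd : ∀ x y, φV (x + y) = φV x + φV y)
    (hsemi : ∀ (c : LaurentSeries (AlgebraicClosure (ZMod p))) (x : V),
      φV (c • x) = φ c • φV x)
    (hetale : Submodule.span (LaurentSeries (AlgebraicClosure (ZMod p)))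
      (Set.range φV) = ⊤)
    (hsimple : ∀ W : Submodule (LaurentSeries (AlgebraicClosure (ZMod p))) V,
      (∀ x ∈ W, φV x ∈ W) → W = ⊥ ∨ W = ⊤) :
    ∃ (δ n : ℕ), 0 < δ ∧ ∃ z : V, z ≠ 0 ∧
      φV^[δ] z = (HahnSeries.single (n : ℤ) 1 :
        LaurentSeries (AlgebraicClosure (ZMod p))) • z :=
  stmt14_general p hb (σ := σ) ⟨hφ1, hφ2⟩
    { toFun := φV, map_add' := hadd, map_smul' := hsemi } hetale
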